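/- The equivalence problem for erasing pattern languages with regular constraints is undecidable already for terminal-free patterns: for the binary alphabet Σ = {0,#} there is no algorithm that, given two patterns with regular constraints (α, r_α) and (β, r_β) in which α and β contain no terminal symbols (i.e., α, β are finite words over the variable set ℕ alone), decides whether L_E(α, r_α) = L_E(β, r_β). Formally, the predicate 'L_E(α, r_α) = L_E(β, r_β)' on such encoded terminal-free input pairs is not a computable predicate. -/

import Mathlib

/-- The binary alphabet `{0, #}`: `false` represents `0`, `true` represents `#`. -/
abbrev Bin := Bool

/-- Patterns over `Σ ∪ X` with `Σ = Bin` and variable set `X = ℕ`. -/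
abbrev Pattern := List (Bin ⊕ ℕ)

/-- Terminal-free patterns: finite words over the variable set `ℕ` alone. -/
abbrev TFPattern := List ℕ

/-- Applying a substitution (determined by its action on variables, and fixing every
terminal) to a pattern. -/
def applySub (s : ℕ → List Bin) : Pattern → List Bin
  | [] => []
  | c :: p => Sum.elim (fun a => [a]) s c ++ applySub s p

/-- The set of variables occurring in a pattern. -/
def varsOf (p : Pattern) : Set ℕ := {x | Sum.inr x ∈ p}

/-- A substitution is `r`-valid on `p` if every variable occurring in `p` is mapped into
its constraint language. -/
def Valid (r : ℕ → Set (List Bin)) (p : Pattern) (s : ℕ → List Bin) : Prop :=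
  ∀ x ∈ varsOf p, s x ∈ r x

/-- The erasing constrained pattern language `L_E(p, r)`. -/
def LangE (p : Pattern) (r : ℕ → Set (List Bin)) : Set (List Bin) :=
  {w | ∃ s, Valid r p s ∧ applySub s p = w}

/-- A regular constraint, given as a finite association list assigning regular
expressions to finitely many variables. -/
abbrev RegConstraint := List (ℕ × RegularExpression Bin)

/-- The constraint described by an association list: unlisted variables are
constrained to `Σ*`. -/
def constraintOf (l : RegConstraint) : ℕ → Set (List Bin) := fun x =>
  match l.lookup x with
  | some e => (e.matches' : Set (List Bin))
  | none => Set.univ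

/-- A standard injective encoding of regular expressions into `ℕ`. -/
def encRE : RegularExpression Bin → ℕ
  | .zero => Nat.pair 0 0
  | .epsilon => Nat.pair 1 0
  | .char a => Nat.pair 2 (Encodable.encode a)
  | .plus r s => Nat.pair 3 (Nat.pair (encRE r) (encRE s))
  | .comp r s => Nat.pair 4 (Nat.pair (encRE r) (encRE s))
  | .star r => Nat.pair 5 (encRE r)

/-- A standard encoding of a terminal-free input pair `((α, r_α), (β, r_β))` into `ℕ`. -/
def encodeTFInput (inp : (TFPattern × RegConstraint) × (TFPattern × RegConstraint)) : ℕ :=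
  Encodable.encode ((inp.1.1, inp.1.2.map fun q => (q.1, encRE q.2)),
                    (inp.2.1, inp.2.2.map fun q => (q.1, encRE q.2)))

namespace EqUndec

open RegularExpression

/-- Actions of the register machine. -/
inductive Act where
  | cpy (d j : ℕ) : Act
  | suc (d j : ℕ) : Act
  | hav (d : ℕ) : Act
  | gz (d : ℕ) : Act
  | geq (d j : ℕ) : Act
  | fin (d : ℕ) : Act

/-- links `(j, e)` into register `i`: new value of `i` plus `e` is old value of `j` plus one. -/
def src : Act → ℕ → List (ℕ × ℕ)
  | .cpy d j, i => if i = d then [(j, 1)] else [(i, 1)]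
  | .suc d j, i => if i = d then [(j, 0)] else [(i, 1)]
  | .hav d, i => if i = d then [] else [(i, 1)]
  | .gz _, i => [(i, 1)]
  | .geq d j, i => if i = d then [(d, 1), (j, 1)] else [(i, 1)]
  | .fin _, _ => []

def isz : Act → ℕ → Bool
  | .gz d, i => i == d
  | .fin d, i => i == d
  | _, _ => false

def code : Act → ℕ
  | .cpy d j => Nat.pair 0 (Nat.pair d j)
  | .suc d j => Nat.pair 1 (Nat.pair d j)
  | .hav d => Nat.pair 2 d
  | .gz d => Nat.pair 3 d
  | .geq d j => Nat.pair 4 (Nat.pair d j)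
  | .fin d => Nat.pair 5 d

theorem code_inj {a b : Act} (h : code a = code b) : a = b := by
  cases a <;> cases b <;> simp_all [code, Nat.pair_eq_pair]

abbrev Store := ℕ → ℕ

def actRel (a : Act) (s t : Store) : Prop :=
  (∀ i, ∀ p ∈ src a i, t i + p.2 = s p.1 + 1) ∧ ∀ i, isz a i = true → s i = 0

def exec : List Act → Store → Store → Prop
  | [], s, t => s = t
  | a :: w, s, t => ∃ u, actRel a s u ∧ exec w u t

theorem exec_append (w w' : List Act) (s t : Store) :
    exec (w ++ w') s t ↔ ∃ u, exec w s u ∧ exec w' u t := by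
  induction w generalizing s with
  | nil => simp [exec]
  | cons a w ih =>
    simp only [List.cons_append, exec, ih]
    constructor
    · rintro ⟨u, h, v, h1, h2⟩; exact ⟨v, ⟨u, h, h1⟩, h2⟩
    · rintro ⟨v, ⟨u, h, h1⟩, h2⟩; exact ⟨u, h, v, h1, h2⟩

def Run (P : RegularExpression Act) (s t : Store) : Prop := ∃ w ∈ P.matches', exec w s t

theorem run_char (a : Act) (s t : Store) : Run (char a) s t ↔ actRel a s t := by
  constructor
  · rintro ⟨w, hw, h⟩
    have : w = [a] := hw
    subst this
    obtain ⟨u, h, h'⟩ := h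
    have : u = t := h'
    subst this; exact h
  · intro h
    exact ⟨[a], rfl, t, h, rfl⟩

theorem run_comp (P Q : RegularExpression Act) (s t : Store) :
    Run (P * Q) s t ↔ ∃ u, Run P s u ∧ Run Q u t := by
  constructor
  · rintro ⟨w, hw, h⟩
    rw [matches'_mul, Language.mem_mul] at hw
    obtain ⟨a, ha, b, hb, rfl⟩ := hw
    obtain ⟨u, h1, h2⟩ := (exec_append _ _ _ _).1 h
    exact ⟨u, ⟨a, ha, h1⟩, b, hb, h2⟩
  · rintro ⟨u, ⟨a, ha, h1⟩, b, hb, h2⟩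
    refine ⟨a ++ b, ?_, (exec_append _ _ _ _).2 ⟨u, h1, h2⟩⟩
    rw [matches'_mul]
    exact Language.append_mem_mul ha hb

theorem run_star_ind (P : RegularExpression Act) (I : Store → Prop)
    (hI : ∀ s t, I s → Run P s t → I t) {s t : Store} (hs : I s) (h : Run (star P) s t) : I t := by
  obtain ⟨w, hw, h⟩ := h
  rw [matches'_star, Language.mem_kstar] at hw
  obtain ⟨L, rfl, hL⟩ := hw
  induction L generalizing s with
  | nil =>
    have : s = t := h
    exact this ▸ hs
  | cons a L ih =>
    rw [List.flatten_cons] at h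
    obtain ⟨u, h1, h2⟩ := (exec_append _ _ _ _).1 h
    exact ih (hI _ _ hs ⟨a, hL a (by simp), h1⟩) (fun y hy => hL y (by simp [hy])) h2

theorem run_star_refl (P : RegularExpression Act) (s : Store) : Run (star P) s s :=
  ⟨[], Language.nil_mem_kstar _, rfl⟩

theorem run_star_tail (P : RegularExpression Act) {s t u : Store} (h : Run (star P) s t)
    (h' : Run P t u) : Run (star P) s u := by
  obtain ⟨w, hw, h⟩ := h
  rw [matches'_star, Language.mem_kstar] at hw
  obtain ⟨L, rfl, hL⟩ := hw
  obtain ⟨w', hw', h'⟩ := h'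
  refine ⟨(L ++ [w']).flatten, ?_, ?_⟩
  · rw [matches'_star, Language.mem_kstar]
    refine ⟨_, rfl, ?_⟩
    intro y hy
    rcases List.mem_append.1 hy with hy | hy
    · exact hL y hy
    · rw [List.mem_singleton.1 hy]; exact hw'
  · rw [List.flatten_append, exec_append]
    exact ⟨t, h, by simpa using h'⟩

theorem rel_cpy (d j : ℕ) (s t : Store) :
    actRel (.cpy d j) s t ↔ t = Function.update s d (s j) := by
  constructor
  · rintro ⟨h, -⟩
    funext i
    have := h i
    by_cases hi : i = d
    · subst hi; simpa [src] using this
    · simpa [src, hi] using this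
  · rintro rfl
    refine ⟨fun i => ?_, fun i h => by simp [isz] at h⟩
    by_cases hi : i = d
    · subst hi; simp [src]
    · simp [src, hi]

theorem rel_suc (d j : ℕ) (s t : Store) :
    actRel (.suc d j) s t ↔ t = Function.update s d (s j + 1) := by
  constructor
  · rintro ⟨h, -⟩
    funext i
    have := h i
    by_cases hi : i = d
    · subst hi; simpa [src] using this
    · simpa [src, hi] using this
  · rintro rfl
    refine ⟨fun i => ?_, fun i h => by simp [isz] at h⟩
    by_cases hi : i = d
    · subst hi; simp [src]
    · simp [src, hi]

theorem rel_hav (d : ℕ) (s t : Store) :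
    actRel (.hav d) s t ↔ ∀ i, i ≠ d → t i = s i := by
  constructor
  · rintro ⟨h, -⟩ i hi
    have := h i
    simpa [src, hi] using this
  · intro h
    refine ⟨fun i => ?_, fun i h => by simp [isz] at h⟩
    by_cases hi : i = d
    · subst hi; simp [src]
    · simp [src, hi, h i hi]

theorem rel_gz (d : ℕ) (s t : Store) :
    actRel (.gz d) s t ↔ t = s ∧ s d = 0 := by
  constructor
  · rintro ⟨h, h'⟩
    refine ⟨?_, h' d (by simp [isz])⟩
    funext i
    have := h i
    simpa [src] using this
  · rintro ⟨rfl, h⟩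
    refine ⟨fun i => by simp [src], fun i hi => ?_⟩
    have : i = d := by simpa [isz] using hi
    rw [this, h]

theorem rel_geq (d j : ℕ) (s t : Store) :
    actRel (.geq d j) s t ↔ t = s ∧ s d = s j := by
  constructor
  · rintro ⟨h, h'⟩
    have hd := h d
    simp [src] at hd
    refine ⟨?_, by omega⟩
    funext i
    have := h i
    by_cases hi : i = d
    · subst hi; exact hd.1
    · simpa [src, hi] using this
  · rintro ⟨rfl, h⟩
    refine ⟨fun i => ?_, fun i h => by simp [isz] at h⟩
    by_cases hi : i = d
    · subst hi; simp [src, h]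
    · simp [src, hi]

/-- `P` computes `f` of the argument registers into `d`, preserving registers below `b`. -/
structure Spec {n : ℕ} (P : RegularExpression Act) (f : List.Vector ℕ n → ℕ) (args : Fin n → ℕ)
    (d b : ℕ) : Prop where
  sound : ∀ s t, Run P s t →
    t d = f (List.Vector.ofFn fun i => s (args i)) ∧ ∀ i, i < b → i ≠ d → t i = s i
  complete : ∀ s, ∃ t, Run P s t

/-- Auxiliary: computing several functions into consecutive registers. -/
theorem compile_many {m : ℕ} (args : Fin m → ℕ) (b B : ℕ)  (hargs : ∀ i, args i < b)
    (n : ℕ) (g : Fin n → List.Vector ℕ m → ℕ) (hB : b + n ≤ B)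
    (hg : ∀ i, ∀ d, d < B → ∃ P, Spec P (g i) args d B) :
    ∃ P, (∀ s t, Run P s t → (∀ i : Fin n, t (b + i) = g i (List.Vector.ofFn fun i => s (args i)))
        ∧ ∀ i, i < b → t i = s i) ∧ ∀ s, ∃ t, Run P s t := by
  induction n with
  | zero =>
    refine ⟨char (.cpy 0 0), ?_, ?_⟩
    · intro s t h
      rw [run_char, rel_cpy] at h
      refine ⟨fun i => i.elim0, fun i _ => ?_⟩
      rw [h, Function.update_eq_self]
    · intro s
      exact ⟨_, (run_char _ _ _).2 ((rel_cpy _ _ _ _).2 rfl)⟩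
  | succ n ih =>
    obtain ⟨P, hP, hP'⟩ := ih (fun i => g i.castSucc) (by omega) (fun i => hg i.castSucc)
    obtain ⟨Q, hQ⟩ := hg (Fin.last n) (b + n) (by omega)
    refine ⟨P * Q, ?_, ?_⟩
    · intro s t h
      obtain ⟨u, h1, h2⟩ := (run_comp _ _ _ _).1 h
      obtain ⟨h1, h1'⟩ := hP _ _ h1
      obtain ⟨h2, h2'⟩ := hQ.sound _ _ h2
      have e : (fun i => u (args i)) = fun i => s (args i) :=
        funext fun i => h1' _ (hargs i)
      rw [e] at h2
      constructor
      · intro i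
        refine Fin.lastCases ?_ (fun i => ?_) i
        · simpa using h2
        · have hi := i.2
          rw [← h1 i]
          simp only [Fin.val_castSucc]
          exact h2' _ (by omega) (by omega)
      · intro i hi
        rw [h2' i (by omega) (by omega), h1' i hi]
    · intro s
      obtain ⟨u, hu⟩ := hP' s
      obtain ⟨t, ht⟩ := hQ.complete u
      exact ⟨t, (run_comp _ _ _ _).2 ⟨u, hu, ht⟩⟩

theorem compile {n : ℕ} {f : List.Vector ℕ n → ℕ} (hf : Nat.Primrec' f) :
    ∀ (args : Fin n → ℕ) (d b : ℕ), (∀ i, args i < b) → d < b → ∃ P, Spec P f args d b := by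
  induction hf with
  | zero =>
    intro args d b _ _
    refine ⟨char (.hav d) * char (.gz d), ?_, ?_⟩
    · intro s t h
      obtain ⟨u, h1, h2⟩ := (run_comp _ _ _ _).1 h
      rw [run_char, rel_hav] at h1
      rw [run_char, rel_gz] at h2
      obtain ⟨rfl, h2⟩ := h2
      exact ⟨h2, fun i _ hi => h1 i hi⟩
    · intro s
      refine ⟨Function.update s d 0, (run_comp _ _ _ _).2 ⟨Function.update s d 0, ?_, ?_⟩⟩
      · rw [run_char, rel_hav]; intro i hi; simp [hi]
      · rw [run_char, rel_gz]; simp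
  | succ =>
    intro args d b _ _
    refine ⟨char (.suc d (args 0)), ?_, ?_⟩
    · intro s t h
      rw [run_char, rel_suc] at h
      subst h
      refine ⟨by simp, fun i _ hi => by simp [hi]⟩
    · intro s
      exact ⟨_, (run_char _ _ _).2 ((rel_suc _ _ _ _).2 rfl)⟩
  | get i =>
    intro args d b _ _
    refine ⟨char (.cpy d (args i)), ?_, ?_⟩
    · intro s t h
      rw [run_char, rel_cpy] at h
      subst h
      refine ⟨by simp, fun i _ hi => by simp [hi]⟩
    · intro s
      exact ⟨_, (run_char _ _ _).2 ((rel_cpy _ _ _ _).2 rfl)⟩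
  | @comp m n f g _ _ ihf ihg =>
    intro args d b hargs hd
    obtain ⟨P, hP, hP'⟩ := compile_many args b (b + n) hargs n g le_rfl
      (fun i d' hd' => ihg i args d' (b + n) (fun i => by have := hargs i; omega) hd')
    obtain ⟨Q, hQ⟩ := ihf (fun i => b + i) d (b + n) (fun i => by have := i.2; omega) (by omega)
    refine ⟨P * Q, ?_, ?_⟩
    · intro s t h
      obtain ⟨u, h1, h2⟩ := (run_comp _ _ _ _).1 h
      obtain ⟨h1, h1'⟩ := hP _ _ h1
      obtain ⟨h2, h2'⟩ := hQ.sound _ _ h2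
      constructor
      · rw [h2]; congr 2; funext i; exact h1 i
      · intro i hi hid
        rw [h2' i (by omega) hid, h1' i hi]
    · intro s
      obtain ⟨u, hu⟩ := hP' s
      obtain ⟨t, ht⟩ := hQ.complete u
      exact ⟨t, (run_comp _ _ _ _).2 ⟨u, hu, ht⟩⟩
  | @prec n f g _ _ ihf ihg =>
    intro args d b hargs hd
    -- registers: `b` is the counter, `b+1` the accumulator
    obtain ⟨F, hF⟩ := ihf (fun i => args i.succ) (b + 1) (b + 2)
      (fun i => by have := hargs i.succ; omega) (by omega)
    obtain ⟨G, hG⟩ := ihg (Fin.cons b (Fin.cons (b + 1) fun i => args i.succ)) (b + 1) (b + 2)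
      (fun i => by
        refine Fin.cases ?_ (fun i => ?_) i
        · simp
        · refine Fin.cases ?_ (fun i => ?_) i
          · simp
          · have := hargs i.succ
            simp only [Fin.cons_succ]; omega) (by omega)
    let body := G * char (.suc b b)
    let P := char (.hav b) * (char (.gz b) * (F * (star body *
      (char (.geq b (args 0)) * char (.cpy d (b + 1))))))
    let r (s : Store) (k : ℕ) : ℕ :=
      Nat.rec (f (List.Vector.ofFn fun i => s (args i.succ)))
        (fun y IH => g (y ::ᵥ IH ::ᵥ List.Vector.ofFn fun i => s (args i.succ))) k
    have hbody : ∀ s t u k, (t b = k ∧ t (b + 1) = r s k ∧ ∀ i, i < b → t i = s i) →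
        Run body t u → (u b = k + 1 ∧ u (b + 1) = r s (k + 1) ∧ ∀ i, i < b → u i = s i) := by
      intro s t u k ⟨h1, h2, h3⟩ h
      obtain ⟨v, hv1, hv2⟩ := (run_comp _ _ _ _).1 h
      obtain ⟨hv1, hv1'⟩ := hG.sound _ _ hv1
      rw [run_char, rel_suc] at hv2
      subst hv2
      have hvb := hv1' b (by omega) (by omega)
      refine ⟨by simp [hvb, h1], ?_, ?_⟩
      · rw [Function.update_of_ne (by omega), hv1]
        show _ = g (k ::ᵥ r s k ::ᵥ _)
        congr 1
        rw [List.Vector.ofFn, List.Vector.ofFn]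
        simp only [Fin.cons_zero, Fin.cons_succ, h1, h2]
        congr 3
        funext i
        exact h3 _ (hargs _)
      · intro i hi
        rw [Function.update_of_ne (by omega), hv1' i (by omega) (by omega), h3 i hi]
    have hstart : ∀ s t, (∀ i, i ≠ b → t i = s i) → t b = 0 → ∀ u, Run F t u →
        (u b = 0 ∧ u (b + 1) = r s 0 ∧ ∀ i, i < b → u i = s i) := by
      intro s t h1 h2 u hu
      obtain ⟨hu, hu'⟩ := hF.sound _ _ hu
      refine ⟨by rw [hu' b (by omega) (by omega), h2], ?_, ?_⟩
      · rw [hu]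
        show f _ = f _
        congr 2
        funext i
        exact h1 _ (by have := hargs i.succ; omega)
      · intro i hi
        rw [hu' i (by omega) (by omega), h1 i (by omega)]
    refine ⟨P, ?_, ?_⟩
    · intro s t h
      obtain ⟨u1, h1, hA⟩ := (run_comp _ _ _ _).1 h
      obtain ⟨u2, h2, hB⟩ := (run_comp _ _ _ _).1 hA
      obtain ⟨u3, h3, hC⟩ := (run_comp _ _ _ _).1 hB
      obtain ⟨u4, h4, hD⟩ := (run_comp _ _ _ _).1 hC
      obtain ⟨u5, h5, hE⟩ := (run_comp _ _ _ _).1 hD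
      rw [run_char, rel_hav] at h1
      rw [run_char, rel_gz] at h2
      obtain ⟨rfl, h2⟩ := h2
      have h3' := hstart s _ h1 h2 _ h3
      have h4' : ∃ k, (u4 b = k ∧ u4 (b + 1) = r s k ∧ ∀ i, i < b → u4 i = s i) :=
        run_star_ind body (fun u => ∃ k, (u b = k ∧ u (b + 1) = r s k ∧ ∀ i, i < b → u i = s i))
          (fun x y ⟨k, hk⟩ hxy => ⟨k + 1, hbody s x y k hk hxy⟩) ⟨0, h3'⟩ h4
      rw [run_char, rel_geq] at h5
      obtain ⟨rfl, h5⟩ := h5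
      rw [run_char, rel_cpy] at hE
      subst hE
      obtain ⟨k, hk1, hk2, hk3⟩ := h4'
      constructor
      · rw [Function.update_self, hk2]
        have : k = s (args 0) := by rw [← hk1, h5, hk3 _ (hargs 0)]
        subst this
        simp only [r, List.Vector.ofFn, List.Vector.head_cons, List.Vector.tail_cons]
      · intro i hi hid
        rw [Function.update_of_ne hid, hk3 i hi]
    · intro s
      obtain ⟨u, hu⟩ := hF.complete (Function.update s b 0)
      have hu' := hstart s _ (fun i hi => by simp [hi]) (by simp) _ hu
      have hloop : ∀ k, ∃ v, Run (star body) u v ∧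
          (v b = k ∧ v (b + 1) = r s k ∧ ∀ i, i < b → v i = s i) := by
        intro k
        induction k with
        | zero => exact ⟨u, run_star_refl _ _, hu'⟩
        | succ k ih =>
          obtain ⟨v, hv, hv'⟩ := ih
          obtain ⟨x, hx⟩ := hG.complete v
          have hb : Run body v (Function.update x b (x b + 1)) :=
            (run_comp _ _ _ _).2 ⟨x, hx, (run_char _ _ _).2 ((rel_suc _ _ _ _).2 rfl)⟩
          exact ⟨_, run_star_tail _ hv hb, hbody s _ _ _ hv' hb⟩
      obtain ⟨v, hv, hv1, hv2, hv3⟩ := hloop (s (args 0))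
      refine ⟨Function.update v d (v (b + 1)), ?_⟩
      refine (run_comp _ _ _ _).2 ⟨Function.update s b 0, ?_, ?_⟩
      · rw [run_char, rel_hav]; intro i hi; simp [hi]
      refine (run_comp _ _ _ _).2 ⟨Function.update s b 0, ?_, ?_⟩
      · rw [run_char, rel_gz]; simp
      refine (run_comp _ _ _ _).2 ⟨u, hu, ?_⟩
      refine (run_comp _ _ _ _).2 ⟨v, hv, ?_⟩
      refine (run_comp _ _ _ _).2 ⟨v, ?_, ?_⟩
      · rw [run_char, rel_geq]
        exact ⟨rfl, by rw [hv1, hv3 _ (hargs 0)]⟩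
      · rw [run_char, rel_cpy]

/-- A fixed program with an undecidable acceptance problem. -/
theorem exists_prog : ∃ P : RegularExpression Act,
    ¬ ComputablePred fun n : ℕ => ∃ s t : Store, s 0 = n ∧ Run P s t ∧ t 2 = 0 := by
  have hp : Primrec₂ fun k n : ℕ =>
      (if (Nat.Partrec.Code.evaln k (Denumerable.ofNat Nat.Partrec.Code n) 0).isSome = true
        then 0 else 1 : ℕ) := by
    refine Primrec.ite (Primrec.eq.comp (Primrec.option_isSome.comp ?_) (Primrec.const true))
      (Primrec.const 0) (Primrec.const 1)
    exact Nat.Partrec.Code.primrec_evaln.comp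
      ((Primrec.fst.pair ((Primrec.ofNat _).comp Primrec.snd)).pair (Primrec.const 0))
  have hp' := Nat.Primrec'.prim_iff₂.2 hp
  obtain ⟨P, hP⟩ := compile hp' ![1, 0] 2 3 (by decide) (by decide)
  refine ⟨P, fun hc => ComputablePred.halting_problem 0 ?_⟩
  have key : ∀ n : ℕ, (∃ s t : Store, s 0 = n ∧ Run P s t ∧ t 2 = 0) ↔
      ((Denumerable.ofNat Nat.Partrec.Code n).eval 0).Dom := by
    intro n
    constructor
    · rintro ⟨s, t, rfl, h, h0⟩
      have := (hP.sound _ _ h).1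
      rw [h0] at this
      simp [List.Vector.ofFn] at this
      obtain ⟨x, hx⟩ := Option.ne_none_iff_exists'.1 this
      exact Part.dom_iff_mem.2 ⟨x, Nat.Partrec.Code.evaln_complete.2 ⟨_, hx⟩⟩
    · intro h
      obtain ⟨x, hx⟩ := Part.dom_iff_mem.1 h
      obtain ⟨k, hk⟩ := Nat.Partrec.Code.evaln_complete.1 hx
      let s : Store := fun i => if i = 0 then n else k
      obtain ⟨t, ht⟩ := hP.complete s
      refine ⟨s, t, rfl, ht, ?_⟩
      rw [(hP.sound _ _ ht).1]
      have hk' : Nat.Partrec.Code.evaln k (Denumerable.ofNat Nat.Partrec.Code n) 0 = some x := hk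
      simp [List.Vector.ofFn, s, hk']
  obtain ⟨f, hf, hfe⟩ := ComputablePred.computable_iff.1 hc
  refine ComputablePred.computable_iff.2
    ⟨fun c => f (Encodable.encode c), hf.comp Computable.encode, ?_⟩
  funext c
  have h1 := congrFun hfe (Encodable.encode c)
  rw [← h1, key, Denumerable.ofNat_encode]


/-! ### Encoding of number lists as binary words -/

abbrev zs (n : ℕ) : List Bool := List.replicate n false

theorem zs_add (m n : ℕ) : zs m ++ zs n = zs (m + n) := by simp [zs]

def E (l : List ℕ) : List Bool := l.flatMap fun n => true :: zs n

theorem E_nil : E [] = [] := rfl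
theorem E_cons (n : ℕ) (l : List ℕ) : E (n :: l) = true :: (zs n ++ E l) := by simp [E]
theorem E_append (l l' : List ℕ) : E (l ++ l') = E l ++ E l' := by simp [E]

theorem zs_split {n : ℕ} {r y z : List Bool} (h : zs n ++ r = y ++ true :: z) :
    ∃ y', y = zs n ++ y' ∧ r = y' ++ true :: z := by
  induction n generalizing y with
  | zero => exact ⟨y, by simp, by simpa using h⟩
  | succ n ih =>
    cases y with
    | nil => simp [zs, List.replicate_succ] at h
    | cons b y =>
      simp only [zs, List.replicate_succ, List.cons_append, List.cons.injEq] at h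
      obtain ⟨rfl, h⟩ := h
      obtain ⟨y', rfl, h'⟩ := ih h
      exact ⟨y', by simp [zs, List.replicate_succ], h'⟩

theorem E_split {N : List ℕ} {y z : List Bool} (h : E N = y ++ true :: z) :
    ∃ N1 N2, N = N1 ++ N2 ∧ y = E N1 ∧ true :: z = E N2 := by
  induction N generalizing y with
  | nil => simp [E_nil] at h
  | cons n N ih =>
    cases y with
    | nil => exact ⟨[], n :: N, rfl, rfl, by simpa using h.symm⟩
    | cons b y =>
      rw [E_cons] at h
      simp only [List.cons_append, List.cons.injEq] at h
      obtain ⟨rfl, h⟩ := h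
      obtain ⟨y', rfl, h'⟩ := zs_split h
      obtain ⟨N1, N2, rfl, rfl, h3⟩ := ih h'
      exact ⟨n :: N1, N2, rfl, by rw [E_cons], h3⟩

theorem zs_E_inj {n m : ℕ} {l l' : List ℕ} (h : zs n ++ E l = zs m ++ E l') :
    n = m ∧ E l = E l' := by
  induction n generalizing m with
  | zero =>
    cases m with
    | zero => exact ⟨rfl, by simpa using h⟩
    | succ m => cases l <;> simp [zs, List.replicate_succ, E_cons, E_nil] at h
  | succ n ih =>
    cases m with
    | zero => cases l' <;> simp [zs, List.replicate_succ, E_cons, E_nil] at h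
    | succ m =>
      simp only [zs, List.replicate_succ, List.cons_append, List.cons.injEq, true_and] at h
      obtain ⟨h1, h2⟩ := ih h
      exact ⟨by rw [h1], h2⟩

theorem E_inj {l l' : List ℕ} (h : E l = E l') : l = l' := by
  induction l generalizing l' with
  | nil => cases l' <;> simp [E_cons, E_nil] at h ⊢
  | cons n l ih =>
    cases l' with
    | nil => simp [E_cons, E_nil] at h
    | cons m l' =>
      simp only [E_cons, List.cons.injEq, true_and] at h
      obtain ⟨h1, h2⟩ := zs_E_inj h
      rw [ih h2, h1]

theorem E_factor {N M : List ℕ} {y z : List Bool} (hM : M ≠ [])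
    (h : E N = y ++ (E M ++ true :: z)) : ∃ N1 N2, N = N1 ++ (M ++ N2) := by
  obtain ⟨m, M', rfl⟩ := List.exists_cons_of_ne_nil hM
  have h0 := h
  rw [E_cons, List.cons_append] at h
  obtain ⟨N1, N2, rfl, rfl, h2⟩ := E_split h
  rw [← List.cons_append, ← E_cons] at h2
  obtain ⟨N3, N4, rfl, h3, -⟩ := E_split h2.symm
  rw [← E_inj h3]
  exact ⟨_, _, rfl⟩

/-! ### Regular expressions -/

abbrev RE := RegularExpression Bool

theorem mem_comp {α : Type} {P Q : RegularExpression α} {w : List α} :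
    w ∈ (comp P Q).matches' ↔ ∃ a ∈ P.matches', ∃ b ∈ Q.matches', a ++ b = w := Language.mem_mul

theorem mem_plus {α : Type} {P Q : RegularExpression α} {w : List α} :
    w ∈ (plus P Q).matches' ↔ w ∈ P.matches' ∨ w ∈ Q.matches' := Iff.rfl

theorem mem_char {α : Type} {a : α} {w : List α} : w ∈ (char a).matches' ↔ w = [a] := Iff.rfl

theorem mem_eps {α : Type} {w : List α} : w ∈ (epsilon : RegularExpression α).matches' ↔ w = [] :=
  Iff.rfl

theorem mem_star {α : Type} {P : RegularExpression α} {w : List α} :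
    w ∈ (star P).matches' ↔ ∃ L : List (List α), w = L.flatten ∧ ∀ y ∈ L, y ∈ P.matches' := Iff.rfl

def wordRE : List Bool → RE
  | [] => epsilon
  | a :: w => comp (char a) (wordRE w)

theorem mem_word {u w : List Bool} : w ∈ (wordRE u).matches' ↔ w = u := by
  induction u generalizing w with
  | nil => exact mem_eps
  | cons a u ih =>
    rw [wordRE, mem_comp]
    constructor
    · rintro ⟨x, hx, y, hy, rfl⟩
      rw [mem_char.1 hx, ih.1 hy]; rfl
    · rintro rfl
      exact ⟨[a], rfl, u, ih.2 rfl, rfl⟩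

theorem mem_star_zs {c : ℕ} {w : List Bool} :
    w ∈ (star (wordRE (zs c))).matches' ↔ ∃ n, w = zs (c * n) := by
  rw [mem_star]
  constructor
  · rintro ⟨L, rfl, hL⟩
    induction L with
    | nil => exact ⟨0, by simp⟩
    | cons x L ih =>
      obtain ⟨n, hn⟩ := ih (fun y hy => hL y (by simp [hy]))
      refine ⟨n + 1, ?_⟩
      rw [List.flatten_cons, hn, mem_word.1 (hL x (by simp)), zs_add, mul_add, mul_one, add_comm]
  · rintro ⟨n, rfl⟩
    refine ⟨List.replicate n (zs c), ?_, fun y hy => mem_word.2 (List.eq_of_mem_replicate hy)⟩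
    induction n with
    | zero => simp
    | succ n ih =>
      rw [List.replicate_succ, List.flatten_cons, ← ih, zs_add]; congr 1; ring

def allRE : RE := star (plus (char false) (char true))

theorem mem_all (w : List Bool) : w ∈ allRE.matches' := by
  refine mem_star.2 ⟨w.map fun a => [a], ?_, ?_⟩
  · skip
    induction w with
    | nil => rfl
    | cons a w ih => rw [List.map_cons, List.flatten_cons, ← ih]; rfl
  intro y hy
  obtain ⟨a, -, rfl⟩ := List.mem_map.1 hy
  rw [mem_plus, mem_char, mem_char]
  cases a <;> simp

def sumRE : List RE → RE
  | [] => zero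
  | P :: l => plus P (sumRE l)

theorem mem_sum {l : List RE} {w : List Bool} :
    w ∈ (sumRE l).matches' ↔ ∃ P ∈ l, w ∈ P.matches' := by
  induction l with
  | nil =>
    constructor
    · intro h; exact False.elim h
    · simp
  | cons P l ih => rw [sumRE, mem_plus, ih]; simp

/-- `k` arbitrary fields -/
def nf : ℕ → RE
  | 0 => epsilon
  | k + 1 => comp (char true) (comp (star (wordRE (zs 1))) (nf k))

theorem mem_nf {k : ℕ} {w : List Bool} :
    w ∈ (nf k).matches' ↔ ∃ l : List ℕ, l.length = k ∧ w = E l := by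
  induction k generalizing w with
  | zero =>
    rw [nf, mem_eps]
    constructor
    · rintro rfl; exact ⟨[], rfl, rfl⟩
    · rintro ⟨l, hl, rfl⟩; rw [List.length_eq_zero_iff.1 hl]; rfl
  | succ k ih =>
    rw [nf, mem_comp]
    constructor
    · rintro ⟨x, hx, y, hy, rfl⟩
      obtain ⟨z, hz, u, hu, rfl⟩ := mem_comp.1 hy
      obtain ⟨n, rfl⟩ := mem_star_zs.1 hz
      obtain ⟨l, hl, rfl⟩ := ih.1 hu
      refine ⟨(1 * n) :: l, by simp [hl], ?_⟩
      rw [mem_char.1 hx, E_cons]; rfl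
    · rintro ⟨l, hl, rfl⟩
      cases l with
      | nil => simp at hl
      | cons n l =>
        refine ⟨[true], rfl, zs n ++ E l, mem_comp.2 ⟨zs n, mem_star_zs.2 ⟨n, by simp⟩, E l,
          ih.2 ⟨l, by simpa using hl, rfl⟩, rfl⟩, by rw [E_cons]; rfl⟩

def PP (p : ℕ) : Prop := p = 1 ∨ ∃ k, p = 2 + 2 * k
def QQ (q : ℕ) : Prop := q = 0 ∨ ∃ k, q = 3 + 2 * k

theorem PQ_ne {p q : ℕ} (hp : PP p) (hq : QQ q) : p ≠ q := by
  rcases hp with hp | ⟨k, hp⟩ <;> rcases hq with hq | ⟨k', hq⟩ <;> omega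

theorem PQ_exists {A B e : ℕ} (he : e ≤ 1) (h : B + e ≠ A + 1) :
    ∃ m p q, PP p ∧ QQ q ∧ A + 5 = m + (e + p) ∧ B + 5 = m + (1 + q) := by
  rcases Nat.lt_or_gt_of_ne h with h | h
  · obtain ⟨D, hD⟩ := Nat.exists_eq_add_of_lt h
    -- `p - q = D + 1`
    rcases Nat.even_or_odd' D with ⟨c, hc | hc⟩
    · cases c with
      | zero => exact ⟨B + 4, 1, 0, Or.inl rfl, Or.inl rfl, by omega, by omega⟩
      | succ c => exact ⟨B + 1, 3 + (D + 1), 3, Or.inr ⟨c + 2, by omega⟩, Or.inr ⟨0, rfl⟩,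
                    by omega, by omega⟩
    · exact ⟨B + 4, D + 1, 0, Or.inr ⟨c, by omega⟩, Or.inl rfl, by omega, by omega⟩
  · obtain ⟨D, hD⟩ := Nat.exists_eq_add_of_lt h
    rcases Nat.even_or_odd' D with ⟨c, hc | hc⟩
    · exact ⟨A + 3 - e, 2, D + 3, Or.inr ⟨0, rfl⟩, Or.inr ⟨c, by omega⟩, by omega, by omega⟩
    · exact ⟨A + 4 - e, 1, D + 2, Or.inl rfl, Or.inr ⟨c, by omega⟩, by omega, by omega⟩

def pRE : RE := plus (wordRE (zs 1)) (comp (wordRE (zs 2)) (star (wordRE (zs 2))))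

theorem mem_p {w : List Bool} : w ∈ pRE.matches' ↔ ∃ p, PP p ∧ w = zs p := by
  rw [pRE, mem_plus, mem_word, mem_comp]
  constructor
  · rintro (rfl | ⟨x, hx, y, hy, rfl⟩)
    · exact ⟨1, Or.inl rfl, rfl⟩
    · obtain ⟨n, rfl⟩ := mem_star_zs.1 hy
      rw [mem_word.1 hx, zs_add]
      exact ⟨_, Or.inr ⟨n, rfl⟩, rfl⟩
  · rintro ⟨p, rfl | ⟨k, rfl⟩, rfl⟩
    · exact Or.inl rfl
    · exact Or.inr ⟨_, mem_word.2 rfl, _, mem_star_zs.2 ⟨k, rfl⟩, zs_add _ _⟩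

def qRE : RE := comp (wordRE (zs 1))
  (comp (plus epsilon (comp (wordRE (zs 3)) (star (wordRE (zs 2))))) (comp (char true) allRE))

theorem mem_q {w : List Bool} :
    w ∈ qRE.matches' ↔ ∃ q r, QQ q ∧ w = zs (1 + q) ++ true :: r := by
  rw [qRE, mem_comp]
  constructor
  · rintro ⟨x, hx, y, hy, rfl⟩
    rw [mem_word] at hx
    subst hx
    obtain ⟨u, hu, v, hv, rfl⟩ := mem_comp.1 hy
    obtain ⟨a, ha, r, -, rfl⟩ := mem_comp.1 hv
    rw [mem_char] at ha
    subst ha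
    have : ∃ q, QQ q ∧ u = zs q := by
      rcases mem_plus.1 hu with hu | hu
      · exact ⟨0, Or.inl rfl, mem_eps.1 hu⟩
      · obtain ⟨x, hx, y, hy', rfl⟩ := mem_comp.1 hu
        obtain ⟨n, rfl⟩ := mem_star_zs.1 hy'
        rw [mem_word.1 hx, zs_add]
        exact ⟨_, Or.inr ⟨n, rfl⟩, rfl⟩
    obtain ⟨q, hq, rfl⟩ := this
    refine ⟨q, r, hq, ?_⟩
    rw [← zs_add]; simp
  · rintro ⟨q, r, hq, rfl⟩
    refine ⟨zs 1, mem_word.2 rfl, zs q ++ true :: r, mem_comp.2 ⟨zs q, ?_, true :: r,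
      mem_comp.2 ⟨[true], rfl, r, mem_all r, rfl⟩, rfl⟩, ?_⟩
    · rcases hq with rfl | ⟨k, rfl⟩
      · exact Or.inl rfl
      · exact Or.inr (mem_comp.2 ⟨_, mem_word.2 rfl, _, mem_star_zs.2 ⟨k, rfl⟩, zs_add _ _⟩)
    · rw [← zs_add]; simp

def xRE : RE := comp (char true) (star (wordRE (zs 1)))

theorem mem_x {w : List Bool} : w ∈ xRE.matches' ↔ ∃ m, w = true :: zs m := by
  rw [xRE, mem_comp]
  constructor
  · rintro ⟨x, hx, y, hy, rfl⟩
    obtain ⟨n, rfl⟩ := mem_star_zs.1 hy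
    rw [mem_char.1 hx]
    exact ⟨_, rfl⟩
  · rintro ⟨m, rfl⟩
    exact ⟨[true], rfl, zs m, mem_star_zs.2 ⟨m, by simp⟩, rfl⟩

/-- Mismatch between register `p.1` in a block with action `a` and register `i` in the next. -/
def mis (K : ℕ) (a : Act) (i : ℕ) (p : ℕ × ℕ) : RE :=
  comp (wordRE (zs p.2)) (comp pRE (comp (nf (K - 1 - p.1))
    (comp (wordRE (E [0, code a + 1])) (nf i))))

theorem mem_mis {K : ℕ} {a : Act} {i : ℕ} {p : ℕ × ℕ} {w : List Bool} :
    w ∈ (mis K a i p).matches' ↔ ∃ (pp : ℕ) (U V : List ℕ), PP pp ∧ U.length = K - 1 - p.1 ∧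
      V.length = i ∧ w = zs (p.2 + pp) ++ E (U ++ 0 :: (code a + 1) :: V) := by
  rw [mis, mem_comp]
  constructor
  · rintro ⟨x, hx, y, hy, rfl⟩
    obtain ⟨x2, hx2, y2, hy2, rfl⟩ := mem_comp.1 hy
    obtain ⟨x3, hx3, y3, hy3, rfl⟩ := mem_comp.1 hy2
    obtain ⟨x4, hx4, y4, hy4, rfl⟩ := mem_comp.1 hy3
    rw [mem_word] at hx hx4
    obtain ⟨pp, hpp, rfl⟩ := mem_p.1 hx2
    obtain ⟨U, hU, rfl⟩ := mem_nf.1 hx3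
    obtain ⟨V, hV, rfl⟩ := mem_nf.1 hy4
    subst hx hx4
    refine ⟨pp, U, V, hpp, hU, hV, ?_⟩
    rw [← zs_add, E_append, E_cons, E_cons, E_cons, E_cons, E_nil]; simp only [List.append_assoc, List.cons_append, List.nil_append]
  · rintro ⟨pp, U, V, hpp, hU, hV, rfl⟩
    refine ⟨_, mem_word.2 rfl, _, mem_comp.2 ⟨_, mem_p.2 ⟨pp, hpp, rfl⟩, _, mem_comp.2 ⟨_,
      mem_nf.2 ⟨U, hU, rfl⟩, _, mem_comp.2 ⟨_, mem_word.2 rfl, _, mem_nf.2 ⟨V, hV, rfl⟩, rfl⟩, rfl⟩,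
      rfl⟩, ?_⟩
    rw [← zs_add, E_append, E_cons, E_cons, E_cons, E_cons, E_nil]; simp only [List.append_assoc, List.cons_append, List.nil_append]

def misAll (K : ℕ) (acts : List Act) : RE :=
  sumRE (acts.flatMap fun a => (List.range K).flatMap fun i => (src a i).map fun p => mis K a i p)

theorem mem_misAll {K : ℕ} {acts : List Act} {w : List Bool} :
    w ∈ (misAll K acts).matches' ↔ ∃ a ∈ acts, ∃ i < K, ∃ p ∈ src a i,
      w ∈ (mis K a i p).matches' := by
  rw [misAll, mem_sum]
  simp only [List.mem_flatMap, List.mem_range, List.mem_map]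
  constructor
  · rintro ⟨P, ⟨a, ha, i, hi, p, hp, rfl⟩, h⟩; exact ⟨a, ha, i, hi, p, hp, h⟩
  · rintro ⟨a, ha, i, hi, p, hp, h⟩; exact ⟨_, ⟨a, ha, i, hi, p, hp, rfl⟩, h⟩

/-! ### Blocks -/

def blk (p : Act × List ℕ) : List ℕ := p.2.map (· + 5) ++ [0, code p.1 + 1]

def flat (ts : List (Act × List ℕ)) : List ℕ := ts.flatMap blk

theorem flat_append (ts ts' : List (Act × List ℕ)) : flat (ts ++ ts') = flat ts ++ flat ts' := by
  simp [flat]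

theorem flat_cons (p : Act × List ℕ) (ts : List (Act × List ℕ)) :
    flat (p :: ts) = blk p ++ flat ts := by
  simp [flat]

def st (v : List ℕ) : Store := fun i => v.getD i 0

def Ok (K : ℕ) (p : Act × List ℕ) : Prop := p.2.length = K ∧ ∀ i, isz p.1 i = true → st p.2 i = 0

def flds : List Bool → RE
  | [] => epsilon
  | z :: l => comp (wordRE (true :: zs 5)) (comp (if z then epsilon else star (wordRE (zs 1))) (flds l))

theorem mem_flds {l : List Bool} {w : List Bool} : w ∈ (flds l).matches' ↔
    ∃ v : List ℕ, List.Forall₂ (fun z n => z = true → n = 0) l v ∧ w = E (v.map (· + 5)) := by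
  induction l generalizing w with
  | nil =>
    rw [flds, mem_eps]
    constructor
    · rintro rfl; exact ⟨[], .nil, rfl⟩
    · rintro ⟨v, hv, rfl⟩; cases hv; rfl
  | cons z l ih =>
    rw [flds, mem_comp]
    constructor
    · rintro ⟨x, hx, y, hy, rfl⟩
      obtain ⟨x2, hx2, y2, hy2, rfl⟩ := mem_comp.1 hy
      obtain ⟨v, hv, rfl⟩ := ih.1 hy2
      rw [mem_word] at hx
      subst hx
      have : ∃ n, x2 = zs n ∧ (z = true → n = 0) := by
        cases z with
        | true => exact ⟨0, mem_eps.1 hx2, fun _ => rfl⟩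
        | false =>
          obtain ⟨n, rfl⟩ := mem_star_zs.1 hx2
          exact ⟨_, rfl, by simp⟩
      obtain ⟨n, rfl, hn⟩ := this
      refine ⟨n :: v, .cons hn hv, ?_⟩
      rw [List.map_cons, E_cons, add_comm n 5, ← zs_add]; simp only [List.append_assoc, List.cons_append, List.nil_append]
    · rintro ⟨v, hv, rfl⟩
      cases hv with
      | @cons _ n _ v hn hv =>
        refine ⟨_, mem_word.2 rfl, _, mem_comp.2 ⟨zs n, ?_, _, ih.2 ⟨v, hv, rfl⟩, rfl⟩, ?_⟩
        · cases z with
          | true => rw [hn rfl]; exact mem_eps.2 rfl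
          | false => exact mem_star_zs.2 ⟨n, by simp⟩
        · rw [List.map_cons, E_cons, add_comm n 5, ← zs_add]; simp only [List.append_assoc, List.cons_append, List.nil_append]

def blkRE (K : ℕ) (a : Act) : RE :=
  comp (flds ((List.range K).map (isz a))) (wordRE (E [0, code a + 1]))

theorem forall2_isz (K : ℕ) (a : Act) (v : List ℕ) :
    List.Forall₂ (fun z n => z = true → n = 0) ((List.range K).map (isz a)) v ↔ Ok K (a, v) := by
  rw [List.forall₂_iff_get]
  constructor
  · rintro ⟨h1, h2⟩
    have h1' : v.length = K := by simpa using h1.symm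
    refine ⟨h1', fun i hi => ?_⟩
    by_cases hiK : i < K
    · have := h2 i (by simpa using hiK) (by omega) (by simpa using hi)
      simpa [st, List.getD_eq_getElem?_getD, h1', hiK] using this
    · simp [st, List.getD_eq_getElem?_getD, h1', hiK]
  · rintro ⟨h1, h2⟩
    have h1' : v.length = K := h1
    refine ⟨by simp [h1'], fun i hi hi' => ?_⟩
    intro hz
    have := h2 i (by simpa using hz)
    simpa [st, List.getD_eq_getElem?_getD, hi'] using this

theorem mem_blk {K : ℕ} {a : Act} {w : List Bool} :
    w ∈ (blkRE K a).matches' ↔ ∃ v, Ok K (a, v) ∧ w = E (blk (a, v)) := by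
  rw [blkRE, mem_comp]
  constructor
  · rintro ⟨x, hx, y, hy, rfl⟩
    obtain ⟨v, hv, rfl⟩ := mem_flds.1 hx
    rw [mem_word.1 hy]
    exact ⟨v, (forall2_isz _ _ _).1 hv, by rw [blk, E_append]⟩
  · rintro ⟨v, hv, rfl⟩
    exact ⟨_, mem_flds.2 ⟨v, (forall2_isz _ _ _).2 hv, rfl⟩, _, mem_word.2 rfl,
      by rw [blk, E_append]⟩

def bnd (K : ℕ) : RegularExpression Act → RE
  | .zero => .zero
  | .epsilon => .epsilon
  | .char a => blkRE K a
  | .plus P Q => .plus (bnd K P) (bnd K Q)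
  | .comp P Q => .comp (bnd K P) (bnd K Q)
  | .star P => .star (bnd K P)

theorem mem_bnd {K : ℕ} {P : RegularExpression Act} {w : List Bool} :
    w ∈ (bnd K P).matches' ↔ ∃ ts : List (Act × List ℕ), ts.map Prod.fst ∈ P.matches' ∧
      (∀ p ∈ ts, Ok K p) ∧ w = E (flat ts) := by
  induction P generalizing w with
  | zero =>
    constructor
    · intro h; exact False.elim h
    · rintro ⟨ts, h, -⟩; exact False.elim h
  | epsilon =>
    rw [bnd, mem_eps]
    constructor
    · rintro rfl; exact ⟨[], rfl, by simp, rfl⟩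
    · rintro ⟨ts, h, -, rfl⟩
      rw [List.map_eq_nil_iff.1 (mem_eps.1 h)]; rfl
  | char a =>
    rw [bnd, mem_blk]
    constructor
    · rintro ⟨v, hv, rfl⟩
      exact ⟨[(a, v)], rfl, by simpa using hv, by simp [flat]⟩
    · rintro ⟨ts, h, h2, rfl⟩
      rw [mem_char, List.map_eq_singleton_iff] at h
      obtain ⟨⟨a', v⟩, rfl, rfl⟩ := h
      exact ⟨v, h2 _ (by simp), by simp [flat]⟩
  | plus P Q ihP ihQ =>
    rw [bnd, mem_plus, ihP, ihQ]
    constructor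
    · rintro (⟨ts, h, h2⟩ | ⟨ts, h, h2⟩)
      · exact ⟨ts, Or.inl h, h2⟩
      · exact ⟨ts, Or.inr h, h2⟩
    · rintro ⟨ts, h | h, h2⟩
      · exact Or.inl ⟨ts, h, h2⟩
      · exact Or.inr ⟨ts, h, h2⟩
  | comp P Q ihP ihQ =>
    rw [bnd, mem_comp]
    constructor
    · rintro ⟨x, hx, y, hy, rfl⟩
      obtain ⟨t1, h1, h1', rfl⟩ := ihP.1 hx
      obtain ⟨t2, h2, h2', rfl⟩ := ihQ.1 hy
      refine ⟨t1 ++ t2, ?_, ?_, ?_⟩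
      · rw [List.map_append]; exact mem_comp.2 ⟨_, h1, _, h2, rfl⟩
      · intro p hp
        rcases List.mem_append.1 hp with hp | hp
        · exact h1' p hp
        · exact h2' p hp
      · rw [flat_append, E_append]
    · rintro ⟨ts, h, h', rfl⟩
      obtain ⟨u, hu, v, hv, huv⟩ := mem_comp.1 h
      obtain ⟨t1, t2, rfl, rfl, rfl⟩ := List.map_eq_append_iff.1 huv.symm
      refine ⟨_, ihP.2 ⟨t1, hu, fun p hp => h' p (by simp [hp]), rfl⟩, _,
        ihQ.2 ⟨t2, hv, fun p hp => h' p (by simp [hp]), rfl⟩, ?_⟩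
      rw [flat_append, E_append]
  | star P ih =>
    rw [bnd, mem_star]
    constructor
    · rintro ⟨L, rfl, hL⟩
      induction L with
      | nil => exact ⟨[], mem_star.2 ⟨[], rfl, by simp⟩, by simp, rfl⟩
      | cons x L ihL =>
        obtain ⟨t1, h1, h1', rfl⟩ := ih.1 (hL x (by simp))
        obtain ⟨t2, h2, h2', h2''⟩ := ihL (fun y hy => hL y (by simp [hy]))
        obtain ⟨M, hM, hM'⟩ := mem_star.1 h2
        refine ⟨t1 ++ t2, mem_star.2 ⟨t1.map Prod.fst :: M, ?_, ?_⟩, ?_, ?_⟩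
        · rw [List.map_append, hM]; rfl
        · intro y hy
          rcases List.mem_cons.1 hy with rfl | hy
          · exact h1
          · exact hM' y hy
        · intro p hp
          rcases List.mem_append.1 hp with hp | hp
          · exact h1' p hp
          · exact h2' p hp
        · rw [flat_append, E_append, List.flatten_cons, h2'']
    · rintro ⟨ts, h, h', rfl⟩
      obtain ⟨M, hM, hM'⟩ := mem_star.1 h
      clear h
      induction M generalizing ts with
      | nil =>
        rw [List.flatten_nil, List.map_eq_nil_iff] at hM
        subst hM
        exact ⟨[], rfl, by simp⟩
      | cons u M ihM =>
        rw [List.flatten_cons] at hM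
        obtain ⟨t1, t2, rfl, rfl, h2⟩ := List.map_eq_append_iff.1 hM
        obtain ⟨L, hL, hL'⟩ := ihM t2 (fun p hp => h' p (by simp [hp])) h2
          (fun y hy => hM' y (by simp [hy]))
        refine ⟨E (flat t1) :: L, ?_, ?_⟩
        · rw [flat_append, E_append, List.flatten_cons, hL]
        · intro y hy
          rcases List.mem_cons.1 hy with rfl | hy
          · exact ih.2 ⟨t1, hM' _ (by simp), fun p hp => h' p (by simp [hp]), rfl⟩
          · exact hL' y hy



/-! ### Bounded register indices -/

def bdd (K : ℕ) : Act → Prop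
  | .cpy d j => d < K ∧ j < K
  | .suc d j => d < K ∧ j < K
  | .hav d => d < K
  | .gz d => d < K
  | .geq d j => d < K ∧ j < K
  | .fin d => d < K

def bd : Act → ℕ
  | .cpy d j => d + j + 1
  | .suc d j => d + j + 1
  | .hav d => d + 1
  | .gz d => d + 1
  | .geq d j => d + j + 1
  | .fin d => d + 1

theorem bdd_of_le {K : ℕ} {a : Act} (h : bd a ≤ K) : bdd K a := by
  cases a <;> simp only [bd] at h <;> simp only [bdd] <;> omega

theorem src_lt {K : ℕ} {a : Act} (h : bdd K a) {i : ℕ} (hi : i < K) {p : ℕ × ℕ}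
    (hp : p ∈ src a i) : p.1 < K := by
  cases a <;> simp only [bdd] at h <;> simp only [src] at hp <;> (try split_ifs at hp) <;>
    simp at hp <;> (try rcases hp with hp | hp) <;> subst_vars <;> simp <;> omega

theorem src_ge {K : ℕ} {a : Act} (h : bdd K a) {i : ℕ} (hi : K ≤ i) {p : ℕ × ℕ}
    (hp : p ∈ src a i) : p = (i, 1) := by
  cases a <;> simp only [bdd] at h <;> simp only [src] at hp <;> (try split_ifs at hp) <;>
    simp at hp <;> first | exact hp | omega

theorem src_le {a : Act} {i : ℕ} {p : ℕ × ℕ} (hp : p ∈ src a i) : p.2 ≤ 1 := by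
  cases a <;> simp only [src] at hp <;> (try split_ifs at hp) <;>
    simp at hp <;> (try rcases hp with hp | hp) <;> subst_vars <;> simp

def lets : RegularExpression Act → List Act
  | .zero => []
  | .epsilon => []
  | .char a => [a]
  | .plus P Q => lets P ++ lets Q
  | .comp P Q => lets P ++ lets Q
  | .star P => lets P

theorem mem_lets {P : RegularExpression Act} {w : List Act} (h : w ∈ P.matches') :
    ∀ a ∈ w, a ∈ lets P := by
  induction P generalizing w with
  | zero => exact False.elim h
  | epsilon => rw [mem_eps.1 h]; simp
  | char a => rw [mem_char.1 h]; simp [lets]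
  | plus P Q ihP ihQ =>
    intro a ha
    rcases mem_plus.1 h with h | h
    · exact List.mem_append_left _ (ihP h a ha)
    · exact List.mem_append_right _ (ihQ h a ha)
  | comp P Q ihP ihQ =>
    intro a ha
    obtain ⟨u, hu, v, hv, rfl⟩ := mem_comp.1 h
    rcases List.mem_append.1 ha with ha | ha
    · exact List.mem_append_left _ (ihP hu a ha)
    · exact List.mem_append_right _ (ihQ hv a ha)
  | star P ih =>
    intro a ha
    obtain ⟨L, rfl, hL⟩ := mem_star.1 h
    obtain ⟨u, hu, hau⟩ := List.mem_flatten.1 ha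
    exact ih (hL u hu) a hau

theorem exists_bound (l : List Act) : ∃ K, 2 ≤ K ∧ ∀ a ∈ l, bdd (K + 1) a := by
  have : ∃ K, 2 ≤ K ∧ ∀ a ∈ l, bd a ≤ K + 1 := by
    induction l with
    | nil => exact ⟨2, le_rfl, by simp⟩
    | cons a l ih =>
      obtain ⟨K, h2, h⟩ := ih
      refine ⟨K + bd a, by omega, ?_⟩
      intro b hb
      rcases List.mem_cons.1 hb with rfl | hb
      · omega
      · have := h b hb; omega
  obtain ⟨K, h2, h⟩ := this
  exact ⟨K, h2, fun a ha => bdd_of_le (h a ha)⟩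

/-! ### Chains of blocks and executions -/

def Lk (K : ℕ) (p p' : Act × List ℕ) : Prop :=
  ∀ i < K, ∀ q ∈ src p.1 i, st p'.2 i + q.2 = st p.2 q.1 + 1

theorem st_ge {v : List ℕ} {i : ℕ} (h : v.length ≤ i) : st v i = 0 := by
  simp [st, List.getD_eq_getElem?_getD, List.getElem?_eq_none h]

theorem lk_rel {K : ℕ} {a b : Act} {v v' : List ℕ} (ha : bdd K a) (hv : Ok K (a, v))
    (hv' : v'.length = K) (h : Lk K (a, v) (b, v')) : actRel a (st v) (st v') := by
  refine ⟨fun i p hp => ?_, hv.2⟩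
  by_cases hi : i < K
  · exact h i hi p hp
  · have hl : v.length = K := hv.1
    have := src_ge ha (by omega) hp
    subst this
    show st v' i + 1 = st v i + 1
    rw [st_ge (by omega), st_ge (by omega)]

theorem chain_exec {K : ℕ} {f : Act} {vf : List ℕ} (hf : vf.length = K)
    (ts : List (Act × List ℕ)) (a : Act) (v : List ℕ)
    (hb : ∀ p ∈ (a, v) :: ts, bdd K p.1 ∧ Ok K p)
    (hc : List.IsChain (Lk K) ((a, v) :: (ts ++ [(f, vf)]))) :
    exec (a :: ts.map Prod.fst) (st v) (st vf) := by
  induction ts generalizing a v with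
  | nil =>
    rw [List.nil_append, List.isChain_cons_cons] at hc
    have := hb (a, v) (by simp)
    exact ⟨_, lk_rel this.1 this.2 hf hc.1, rfl⟩
  | cons p ts ih =>
    obtain ⟨b, u⟩ := p
    rw [List.cons_append, List.isChain_cons_cons] at hc
    have h1 := hb (a, v) (by simp)
    have h2 := hb (b, u) (by simp)
    exact ⟨st u, lk_rel h1.1 h1.2 h2.2.1 hc.1, ih b u (fun p hp => hb p (by simp at hp ⊢; tauto)) hc.2⟩

def tr (K : ℕ) (s : Store) : List ℕ := (List.range K).map s

theorem tr_length (K : ℕ) (s : Store) : (tr K s).length = K := by simp [tr]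

theorem st_tr {K : ℕ} {s : Store} {i : ℕ} (h : i < K) : st (tr K s) i = s i := by
  simp [st, tr, List.getD_eq_getElem?_getD, h]

theorem rel_lk {K : ℕ} {a b : Act} {s t : Store} (ha : bdd K a) (h : actRel a s t) :
    Lk K (a, tr K s) (b, tr K t) := by
  intro i hi p hp
  show st (tr K t) i + p.2 = st (tr K s) p.1 + 1
  rw [st_tr hi, st_tr (src_lt ha hi hp)]
  exact h.1 i p hp

theorem ok_tr {K : ℕ} {a : Act} {s : Store} (h : ∀ i, isz a i = true → s i = 0) :
    Ok K (a, tr K s) := by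
  refine ⟨tr_length _ _, fun i hi => ?_⟩
  by_cases hK : i < K
  · exact (st_tr hK).trans (h i hi)
  · exact st_ge (by simp [tr]; omega)

theorem exec_chain {K : ℕ} {f : Act} {t : Store} (w : List Act) (s : Store)
    (hb : ∀ a ∈ w, bdd K a) (h : exec w s t) :
    ∃ ts : List (Act × List ℕ), ts.map Prod.fst = w ∧ (∀ p ∈ ts, Ok K p) ∧
      ∀ a s0, bdd K a → actRel a s0 s →
        List.IsChain (Lk K) ((a, tr K s0) :: (ts ++ [(f, tr K t)])) := by
  induction w generalizing s with
  | nil =>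
    have : s = t := h
    subst this
    refine ⟨[], rfl, by simp, fun a s0 ha hr => ?_⟩
    rw [List.nil_append, List.isChain_cons_cons]
    exact ⟨rel_lk ha hr, by simp⟩
  | cons b w ih =>
    obtain ⟨u, hu, h⟩ := h
    obtain ⟨ts, h1, h2, h3⟩ := ih u (fun a ha => hb a (by simp [ha])) h
    refine ⟨(b, tr K s) :: ts, by simp [h1], ?_, fun a s0 ha hr => ?_⟩
    · intro p hp
      rcases List.mem_cons.1 hp with rfl | hp
      · exact ok_tr hu.2
      · exact h2 p hp
    · rw [List.cons_append, List.isChain_cons_cons]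
      exact ⟨rel_lk ha hr, h3 b s (hb b (by simp)) hu⟩

/-! ### The guess expression -/

abbrev nop : Act := .cpy 0 0

def rep : ℕ → RE
  | 0 => epsilon
  | n + 1 => comp (char false) (rep n)

theorem mem_rep {n : ℕ} {w : List Bool} : w ∈ (rep n).matches' ↔ w = zs n := by
  induction n generalizing w with
  | zero => exact mem_eps
  | succ n ih =>
    rw [rep, mem_comp]
    constructor
    · rintro ⟨x, hx, y, hy, rfl⟩
      rw [mem_char.1 hx, ih.1 hy]; rfl
    · rintro rfl
      exact ⟨[false], rfl, zs n, ih.2 rfl, rfl⟩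

def R2 (K' : ℕ) : RE := comp (wordRE (zs 5))
  (comp (flds (List.replicate K' false)) (wordRE (E [0, code nop + 1])))

def R3 (K : ℕ) (P : RegularExpression Act) : RE := comp (bnd K P) (blkRE K (.fin 2))

def GG (K' : ℕ) (P : RegularExpression Act) (n : ℕ) : RE :=
  comp (char true) (comp (rep n) (comp (R2 K') (R3 (K' + 1) P)))

def full (n : ℕ) (v' : List ℕ) (ts : List (Act × List ℕ)) (vf : List ℕ) : List (Act × List ℕ) :=
  (nop, n :: v') :: (ts ++ [(.fin 2, vf)])

theorem forall2_free (K' : ℕ) (v : List ℕ) :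
    List.Forall₂ (fun z n => z = true → n = 0) (List.replicate K' false) v ↔ v.length = K' := by
  rw [List.forall₂_iff_get]
  constructor
  · rintro ⟨h, -⟩; simpa using h.symm
  · intro h; exact ⟨by simp [h], by simp⟩

theorem mem_GG {K' : ℕ} {P : RegularExpression Act} {n : ℕ} {w : List Bool} :
    w ∈ (GG K' P n).matches' ↔ ∃ v' ts vf, v'.length = K' ∧ ts.map Prod.fst ∈ P.matches' ∧
      (∀ p ∈ ts, Ok (K' + 1) p) ∧ Ok (K' + 1) (.fin 2, vf) ∧ w = E (flat (full n v' ts vf)) := by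
  have key : ∀ (v' : List ℕ) ts vf, E (flat (full n v' ts vf)) = [true] ++ (zs n ++ ((zs 5 ++
      (E (v'.map (· + 5)) ++ E [0, code nop + 1])) ++ (E (flat ts) ++ E (blk (.fin 2, vf))))) := by
    intro v' ts vf
    rw [full, flat_cons, flat_append, blk, E_append, E_append, E_append, List.map_cons, E_cons,
      ← zs_add]
    simp only [flat, List.flatMap_cons, List.flatMap_nil, List.append_nil, List.append_assoc,
      List.cons_append, List.nil_append]
  constructor
  · intro h
    obtain ⟨x1, h1, y1, g1, rfl⟩ := mem_comp.1 h
    obtain ⟨x2, h2, y2, g2, rfl⟩ := mem_comp.1 g1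
    obtain ⟨x3, h3, y3, g3, rfl⟩ := mem_comp.1 g2
    obtain ⟨x4, h4, y4, g4, rfl⟩ := mem_comp.1 h3
    obtain ⟨x5, h5, y5, g5, rfl⟩ := mem_comp.1 g4
    obtain ⟨x6, h6, y6, g6, rfl⟩ := mem_comp.1 g3
    rw [mem_char] at h1
    rw [mem_rep] at h2
    rw [mem_word] at h4 g5
    obtain ⟨v', hv', rfl⟩ := mem_flds.1 h5
    obtain ⟨ts, t1, t2, rfl⟩ := mem_bnd.1 h6
    obtain ⟨vf, f1, rfl⟩ := mem_blk.1 g6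
    subst h1 h2 h4 g5
    exact ⟨v', ts, vf, (forall2_free _ _).1 hv', t1, t2, f1, (key _ _ _).symm⟩
  · rintro ⟨v', ts, vf, hv', t1, t2, f1, rfl⟩
    rw [key]
    exact mem_comp.2 ⟨_, rfl, _, mem_comp.2 ⟨_, mem_rep.2 rfl, _, mem_comp.2 ⟨_, mem_comp.2 ⟨_,
      mem_word.2 rfl, _, mem_comp.2 ⟨_, mem_flds.2 ⟨v', (forall2_free _ _).2 hv', rfl⟩, _,
      mem_word.2 rfl, rfl⟩, rfl⟩, _, mem_comp.2 ⟨_, mem_bnd.2 ⟨ts, t1, t2, rfl⟩, _,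
      mem_blk.2 ⟨vf, f1, rfl⟩, rfl⟩, rfl⟩, rfl⟩, rfl⟩

def Acc (P : RegularExpression Act) (n : ℕ) : Prop := ∃ s t : Store, s 0 = n ∧ Run P s t ∧ t 2 = 0

theorem nop_rel (s : Store) : actRel nop s s := by
  refine ⟨fun i p hp => ?_, fun i hi => ?_⟩
  · simp only [src] at hp
    split_ifs at hp with h <;> simp at hp <;> subst_vars <;> rfl
  · simp [isz] at hi

theorem nop_eq {s t : Store} (h : actRel nop s t) : s = t := by
  rw [rel_cpy] at h
  rw [h]; simp

theorem acc_of_chain {K' : ℕ} {P : RegularExpression Act} {n : ℕ} {v' vf : List ℕ}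
    {ts : List (Act × List ℕ)} (hb : ∀ a ∈ nop :: lets P, bdd (K' + 1) a)
    (h1 : v'.length = K') (h2 : ts.map Prod.fst ∈ P.matches') (h3 : ∀ p ∈ ts, Ok (K' + 1) p)
    (h4 : Ok (K' + 1) (.fin 2, vf)) (hc : List.IsChain (Lk (K' + 1)) (full n v' ts vf)) :
    Acc P n := by
  have := chain_exec (f := .fin 2) h4.1 ts nop (n :: v') (by
    intro p hp
    rcases List.mem_cons.1 hp with rfl | hp
    · exact ⟨hb _ (by simp), by simp [h1], by simp [isz]⟩
    · refine ⟨hb _ (List.mem_cons_of_mem _ (mem_lets h2 _ (List.mem_map_of_mem hp))), h3 p hp⟩) hc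
  obtain ⟨u, hu, h⟩ := this
  have hu := nop_eq hu
  subst hu
  exact ⟨_, _, rfl, ⟨_, h2, h⟩, h4.2 2 (by simp [isz])⟩

theorem chain_of_acc {K' : ℕ} {P : RegularExpression Act} {n : ℕ}
    (hb : ∀ a ∈ nop :: lets P, bdd (K' + 1) a) (h : Acc P n) :
    ∃ v' ts vf, v'.length = K' ∧ ts.map Prod.fst ∈ P.matches' ∧
      (∀ p ∈ ts, Ok (K' + 1) p) ∧ Ok (K' + 1) (.fin 2, vf) ∧
      List.IsChain (Lk (K' + 1)) (full n v' ts vf) := by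
  obtain ⟨s, t, hs, ⟨w, hw, he⟩, ht⟩ := h
  obtain ⟨ts, h1, h2, h3⟩ := exec_chain (K := K' + 1) (f := .fin 2) w s
    (fun a ha => hb a (List.mem_cons_of_mem _ (mem_lets hw a ha))) he
  refine ⟨(List.range K').map (fun i => s (i + 1)), ts, tr (K' + 1) t, by simp, by rwa [h1], h2,
    ok_tr (fun i hi => ?_), ?_⟩
  · have : i = 2 := by simpa [isz] using hi
    rw [this]; exact ht
  · have := h3 nop s (hb _ (by simp)) (nop_rel s)
    have e : tr (K' + 1) s = n :: (List.range K').map (fun i => s (i + 1)) := by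
      rw [tr, List.range_succ_eq_map, List.map_cons, hs, List.map_map]; rfl
    rw [e] at this
    exact this


/-! ### The pattern language -/

def pat : TFPattern := [0, 1, 2, 1, 3]

def cons3 (R : RE) : RegConstraint := [(1, xRE), (2, R), (3, qRE)]

theorem mem_lang {R : RE} {w : List Bool} :
    w ∈ LangE (pat.map Sum.inr) (constraintOf (cons3 R)) ↔ ∃ (y1 : List Bool) (m : ℕ)
      (y2 : List Bool) (q : ℕ) (r : List Bool), y2 ∈ R.matches' ∧ QQ q ∧
      w = y1 ++ (true :: zs m) ++ y2 ++ (true :: zs m) ++ (zs (1 + q) ++ true :: r) := by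
  constructor
  · rintro ⟨s, hs, rfl⟩
    have h1 : s 1 ∈ xRE.matches' := hs 1 (by simp [varsOf, pat])
    have h2 : s 2 ∈ R.matches' := hs 2 (by simp [varsOf, pat])
    have h3 : s 3 ∈ qRE.matches' := hs 3 (by simp [varsOf, pat])
    obtain ⟨m, hm⟩ := mem_x.1 h1
    obtain ⟨q, r, hq, hr⟩ := mem_q.1 h3
    refine ⟨s 0, m, s 2, q, r, h2, hq, ?_⟩
    rw [← hm, ← hr]
    simp [pat, applySub]
  · rintro ⟨y1, m, y2, q, r, h2, hq, rfl⟩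
    refine ⟨fun i => if i = 0 then y1 else if i = 1 then true :: zs m else if i = 2 then y2 else
      zs (1 + q) ++ true :: r, ?_, ?_⟩
    · intro x hx
      have hx : x = 0 ∨ x = 1 ∨ x = 2 ∨ x = 3 := by
        simp [varsOf, pat] at hx
        tauto
      rcases hx with rfl | rfl | rfl | rfl
      · exact Set.mem_univ _
      · exact mem_x.2 ⟨m, rfl⟩
      · exact h2
      · exact mem_q.2 ⟨q, r, hq, rfl⟩
    · simp [pat, applySub]

theorem split_at {v : List ℕ} {j : ℕ} (h : j < v.length) :
    ∃ V1 V2, v = V1 ++ st v j :: V2 ∧ V1.length = j ∧ V2.length = v.length - 1 - j := by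
  refine ⟨v.take j, v.drop (j + 1), ?_, by simp; omega, by simp; omega⟩
  have : st v j = v[j] := by simp [st, List.getD_eq_getElem?_getD, h]
  rw [this, ← List.drop_eq_getElem_cons h, List.take_append_drop]

theorem E_true (l : List ℕ) (z : List Bool) : ∃ r, E l ++ true :: z = true :: r := by
  cases l with
  | nil => exact ⟨z, rfl⟩
  | cons n l => exact ⟨_, by rw [E_cons, List.cons_append]⟩

theorem rewrite_word {K : ℕ} {acts : List Act} {T1 T2 : List (Act × List ℕ)} {a a' : Act}
    {v v' : List ℕ} (ha : a ∈ acts) (hbd : bdd K a) (hv : v.length = K) (hv' : v'.length = K)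
    (hL : ¬ Lk K (a, v) (a', v')) (y z : List Bool) :
    ∃ (y1 : List Bool) (m : ℕ)
      (y2 : List Bool) (q : ℕ) (r : List Bool), y2 ∈ (misAll K acts).matches' ∧ QQ q ∧
      y ++ E (flat (T1 ++ (a, v) :: (a', v') :: T2)) ++ (true :: z) =
        y1 ++ (true :: zs m) ++ y2 ++ (true :: zs m) ++ (zs (1 + q) ++ true :: r) := by
  unfold Lk at hL
  push Not at hL
  obtain ⟨i, hi, ⟨j, e⟩, hs, hne⟩ := hL
  have hj : j < K := src_lt hbd hi hs
  obtain ⟨m, p, q, hp, hq, hA, hB⟩ := PQ_exists (src_le hs) hne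
  simp only at hA hB
  obtain ⟨V1, V2, e1, l1, l2⟩ := split_at (v := v) (j := j) (by omega)
  obtain ⟨W1, W2, e2, k1, k2⟩ := split_at (v := v') (j := i) (by omega)
  have f1 : v.map (· + 5) = V1.map (· + 5) ++ (m + (e + p)) :: V2.map (· + 5) := by
    conv_lhs => rw [e1]
    rw [List.map_append, List.map_cons, hA]
  have f2 : v'.map (· + 5) = W1.map (· + 5) ++ (m + (1 + q)) :: W2.map (· + 5) := by
    conv_lhs => rw [e2]
    rw [List.map_append, List.map_cons, hB]
  obtain ⟨r, hr⟩ := E_true (W2.map (· + 5) ++ (0 :: (code a' + 1) :: flat T2)) z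
  refine ⟨y ++ E (flat T1 ++ V1.map (· + 5)), m, zs (e + p) ++ E (V2.map (· + 5) ++
    0 :: (code a + 1) :: W1.map (· + 5)), q, r, ?_, hq, ?_⟩
  · exact mem_misAll.2 ⟨a, ha, i, hi, (j, e), hs, mem_mis.2 ⟨p, _, _, hp, by simp [l2, hv],
      by simp [k1], rfl⟩⟩
  · rw [← hr]
    simp only [flat_append, flat_cons, blk, f1, f2]
    simp only [E_append, E_cons, ← zs_add, List.append_assoc, List.cons_append,
      List.nil_append]

theorem lang_sub {K' : ℕ} {P : RegularExpression Act} {n : ℕ}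
    (hb : ∀ a ∈ nop :: lets P, bdd (K' + 1) a) (hn : ¬ Acc P n) {w : List Bool}
    (hw : w ∈ LangE (pat.map Sum.inr) (constraintOf (cons3 (GG K' P n)))) :
    w ∈ LangE (pat.map Sum.inr) (constraintOf (cons3 (misAll (K' + 1) (nop :: lets P)))) := by
  obtain ⟨y1, m, y2, q, r, h2, hq, rfl⟩ := mem_lang.1 hw
  obtain ⟨v', ts, vf, g1, g2, g3, g4, rfl⟩ := mem_GG.1 h2
  have hnc : ¬ List.IsChain (Lk (K' + 1)) (full n v' ts vf) := fun hc =>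
    hn (acc_of_chain hb g1 g2 g3 g4 hc)
  rw [List.isChain_iff_forall_rel_of_append_cons_cons] at hnc
  push Not at hnc
  obtain ⟨⟨a, v⟩, ⟨a', u⟩, T1, T2, hf, hL⟩ := hnc
  have hall : ∀ p ∈ full n v' ts vf, p.2.length = K' + 1 ∧ (p.1 ∈ nop :: lets P ∨ p.1 = .fin 2) := by
    intro p hp
    rcases List.mem_cons.1 hp with rfl | hp
    · exact ⟨by simp [g1], by simp⟩
    · rcases List.mem_append.1 hp with hp | hp
      · exact ⟨(g3 p hp).1, Or.inl (List.mem_cons_of_mem _ (mem_lets g2 _ (List.mem_map_of_mem hp)))⟩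
      · rw [List.mem_singleton.1 hp]
        exact ⟨g4.1, Or.inr rfl⟩
  have h3 := hall (a, v) (by rw [hf]; simp)
  have h4 := hall (a', u) (by rw [hf]; simp)
  have ha : a ∈ nop :: lets P := by
    rcases h3.2 with h | h
    · exact h
    · exfalso
      apply hL
      have h : a = .fin 2 := h
      subst h
      intro i hi q hq
      simp [src] at hq
  rw [hf]
  obtain ⟨y1', m', y2', q', r', h1, hq', he⟩ := rewrite_word (T1 := T1) (T2 := T2) ha (hb a ha)
    h3.1 h4.1 hL (y1 ++ true :: zs m) (zs m ++ (zs (1 + q) ++ true :: r))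
  refine mem_lang.2 ⟨y1', m', y2', q', r', h1, hq', ?_⟩
  rw [← he]
  simp only [List.append_assoc, List.cons_append]

/-! ### Parsing -/

theorem zero_split {R X Y Z : List ℕ} (hR : 0 ∉ R) (h : X ++ 0 :: Y = R ++ 0 :: Z) :
    (X = R ∧ Y = Z) ∨ ∃ X', X = R ++ 0 :: X' ∧ X' ++ 0 :: Y = Z := by
  induction R generalizing X with
  | nil =>
    cases X with
    | nil => left; simpa using h
    | cons x X =>
      simp only [List.cons_append, List.nil_append, List.cons.injEq] at h
      obtain ⟨rfl, h⟩ := h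
      exact Or.inr ⟨X, rfl, h⟩
  | cons b R ih =>
    cases X with
    | nil =>
      simp only [List.cons_append, List.nil_append, List.cons.injEq] at h
      exact absurd (by simp [← h.1]) hR
    | cons x X =>
      simp only [List.cons_append, List.cons.injEq] at h
      obtain ⟨rfl, h⟩ := h
      rcases ih (fun h => hR (by simp [h])) h with ⟨rfl, rfl⟩ | ⟨X', rfl, h'⟩
      · exact Or.inl ⟨rfl, rfl⟩
      · exact Or.inr ⟨X', rfl, h'⟩

theorem parse {R X Y : List ℕ} (ts : List (Act × List ℕ)) (hR : 0 ∉ R)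
    (h : X ++ 0 :: Y = R ++ (flat ts ++ [2, 0])) :
    Y = [] ∨ ∃ T1 a s T2, ts = T1 ++ (a, s) :: T2 ∧ (∃ R', X = R' ++ s.map (· + 5)) ∧
      Y = (code a + 1) :: (flat T2 ++ [2, 0]) := by
  induction ts generalizing R X with
  | nil =>
    have h : X ++ 0 :: Y = (R ++ [2]) ++ 0 :: [] := by rw [h]; simp [flat]
    rcases zero_split (by simp [hR]) h with ⟨-, h⟩ | ⟨X', -, h⟩
    · exact Or.inl h
    · simp at h
  | cons p ts ih =>
    obtain ⟨a, s⟩ := p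
    have h : X ++ 0 :: Y = (R ++ s.map (· + 5)) ++ 0 :: ([code a + 1] ++ (flat ts ++ [2, 0])) := by
      rw [h, flat_cons, blk]; simp
    rcases zero_split (by simp [hR]) h with ⟨rfl, rfl⟩ | ⟨X', rfl, h'⟩
    · exact Or.inr ⟨[], a, s, ts, rfl, ⟨R, rfl⟩, rfl⟩
    · rcases ih (R := [code a + 1]) (by simp) h' with h | ⟨T1, a', s', T2, rfl, ⟨R', rfl⟩, rfl⟩
      · exact Or.inl h
      · exact Or.inr ⟨(a, s) :: T1, a', s', T2, rfl, ⟨(R ++ s.map (· + 5)) ++ 0 :: R', by simp⟩, rfl⟩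

theorem st_suffix {N R U s : List ℕ} {x j K : ℕ} (hs : s.length = K) (hj : j < K)
    (hU : U.length = K - 1 - j) (h : N ++ x :: U = R ++ s.map (· + 5)) : st s j + 5 = x := by
  obtain ⟨V1, V2, e1, l1, l2⟩ := split_at (v := s) (j := j) (by omega)
  have f1 : s.map (· + 5) = V1.map (· + 5) ++ (st s j + 5) :: V2.map (· + 5) := by
    conv_lhs => rw [e1]
    rw [List.map_append, List.map_cons]
  rw [f1, ← List.append_assoc] at h
  have := (List.append_inj' h (by simp [hU, l2, hs])).2
  simp at this
  exact this.1.symm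

theorem st_prefix {Z Z' V s : List ℕ} {x i : ℕ} (hi : i < s.length)
    (hV : V.length = i) (h : V ++ x :: Z = s.map (· + 5) ++ Z') : st s i + 5 = x := by
  obtain ⟨V1, V2, e1, l1, l2⟩ := split_at (v := s) (j := i) (by omega)
  have f1 : s.map (· + 5) = V1.map (· + 5) ++ (st s i + 5) :: V2.map (· + 5) := by
    conv_lhs => rw [e1]
    rw [List.map_append, List.map_cons]
  rw [f1, List.append_assoc] at h
  have := (List.append_inj h (by simp [hV, l1])).2
  simp at this
  exact this.1.symm

theorem not_mem_lang {K : ℕ} {acts : List Act} (hb : ∀ a ∈ acts, bdd K a)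
    {ts : List (Act × List ℕ)} {vf : List ℕ} (hl : ∀ p ∈ ts ++ [(Act.fin 2, vf)], p.2.length = K)
    (hc : List.IsChain (Lk K) (ts ++ [(Act.fin 2, vf)])) :
    E ([1] ++ (flat (ts ++ [(Act.fin 2, vf)]) ++ [2, 0])) ∉
      LangE (pat.map Sum.inr) (constraintOf (cons3 (misAll K acts))) := by
  intro hw
  obtain ⟨y1, m, y2, q, r, h2, hq, he⟩ := mem_lang.1 hw
  obtain ⟨a, ha, i, hi, ⟨j, e⟩, hs, hm⟩ := mem_misAll.1 h2
  obtain ⟨p, U, V, hp, hU, hV, rfl⟩ := mem_mis.1 hm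
  simp only at hU
  have hj : j < K := src_lt (hb a ha) hi hs
  have he' : E ([1] ++ (flat (ts ++ [(Act.fin 2, vf)]) ++ [2, 0])) = y1 ++ (E ((m + (e + p)) ::
      (U ++ 0 :: (code a + 1) :: (V ++ [m + (1 + q)]))) ++ true :: r) := by
    rw [he]
    simp only [E_append, E_cons, E_nil, ← zs_add, List.append_assoc, List.cons_append,
      List.nil_append]
  obtain ⟨N1, N2, hN⟩ := E_factor (by simp) he'
  have hN' : (N1 ++ (m + (e + p)) :: U) ++ 0 :: ((code a + 1) :: (V ++ (m + (1 + q)) :: N2)) =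
      [1] ++ (flat (ts ++ [(Act.fin 2, vf)]) ++ [2, 0]) := by
    rw [hN]; simp
  rcases parse _ (by simp) hN' with h | ⟨T1, a', s, T2, hT, ⟨R', hR⟩, hY⟩
  · simp at h
  rw [List.cons.injEq] at hY
  obtain ⟨hcode, hY⟩ := hY
  have haa : a = a' := code_inj (by omega)
  subst haa
  rw [hT] at hc hl
  have hA := st_suffix (s := s) (hl (a, s) (by simp)) hj hU hR
  cases T2 with
  | nil =>
    have := (List.append_inj' hT rfl).2
    simp at this
    rw [← this.1] at hs
    simp [src] at hs
  | cons p' T2 =>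
    obtain ⟨a', s'⟩ := p'
    have hl' : s'.length = K := hl (a', s') (by simp)
    rw [flat_cons, blk, List.append_assoc, List.append_assoc] at hY
    have hB := st_prefix (s := s') (by omega) hV hY
    rw [List.isChain_append_cons_cons] at hc
    have := hc.2.1 i hi (j, e) hs
    simp only at this
    exact PQ_ne hp hq (by omega)

theorem lang_iff {K' : ℕ} {P : RegularExpression Act} (n : ℕ)
    (hb : ∀ a ∈ nop :: lets P, bdd (K' + 1) a) :
    LangE (pat.map Sum.inr) (constraintOf (cons3
      (plus (misAll (K' + 1) (nop :: lets P)) (GG K' P n)))) =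
    LangE (pat.map Sum.inr) (constraintOf (cons3 (misAll (K' + 1) (nop :: lets P)))) ↔
      ¬ Acc P n := by
  constructor
  · intro h hacc
    obtain ⟨v', ts, vf, g1, g2, g3, g4, hc⟩ := chain_of_acc hb hacc
    refine not_mem_lang (ts := (nop, n :: v') :: ts) (vf := vf) hb ?_ hc ?_
    · intro p hp
      rw [List.cons_append] at hp
      rcases List.mem_cons.1 hp with rfl | hp
      · simp [g1]
      · rcases List.mem_append.1 hp with hp | hp
        · exact (g3 p hp).1
        · rw [List.mem_singleton.1 hp]
          exact g4.1
    · rw [← h]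
      refine mem_lang.2 ⟨[], 1, E (flat (full n v' ts vf)), 0, [],
        Or.inr (mem_GG.2 ⟨v', ts, vf, g1, g2, g3, g4, rfl⟩), Or.inl rfl, ?_⟩
      rw [E_append, E_append, List.nil_append, List.append_assoc, List.append_assoc]
      rfl
  · intro hn
    ext w
    constructor
    · intro hw
      obtain ⟨y1, m, y2, q, r, h2 | h2, hq, he⟩ := mem_lang.1 hw
      · exact mem_lang.2 ⟨y1, m, y2, q, r, h2, hq, he⟩
      · exact lang_sub hb hn (mem_lang.2 ⟨y1, m, y2, q, r, h2, hq, he⟩)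
    · intro hw
      obtain ⟨y1, m, y2, q, r, h2, hq, he⟩ := mem_lang.1 hw
      exact mem_lang.2 ⟨y1, m, y2, q, r, Or.inl h2, hq, he⟩

/-! ### Computability of the reduction -/

def inp (K' : ℕ) (P : RegularExpression Act) (n : ℕ) :
    (TFPattern × RegConstraint) × (TFPattern × RegConstraint) :=
  ((pat, cons3 (plus (misAll (K' + 1) (nop :: lets P)) (GG K' P n))),
    (pat, cons3 (misAll (K' + 1) (nop :: lets P))))

theorem rep_primrec : Primrec fun n => encRE (rep n) := by
  have : Primrec fun n : ℕ => (Nat.rec (encRE epsilon)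
      (fun _ x => Nat.pair 4 (Nat.pair (encRE (char false)) x)) n : ℕ) :=
    Primrec.nat_rec₁ _ (Primrec₂.natPair.comp (Primrec.const _)
      (Primrec₂.natPair.comp (Primrec.const _) Primrec.snd))
  refine this.of_eq fun n => ?_
  induction n with
  | zero => rfl
  | succ n ih => simp only [rep, encRE] at ih ⊢; rw [ih]

theorem GG_primrec (K' : ℕ) (P : RegularExpression Act) : Primrec fun n => encRE (GG K' P n) := by
  unfold GG
  simp only [encRE]
  exact Primrec₂.natPair.comp (Primrec.const _) (Primrec₂.natPair.comp (Primrec.const _)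
    (Primrec₂.natPair.comp (Primrec.const _) (Primrec₂.natPair.comp rep_primrec
      (Primrec.const _))))

theorem inp_primrec (K' : ℕ) (P : RegularExpression Act) :
    Primrec fun n => encodeTFInput (inp K' P n) := by
  unfold encodeTFInput inp cons3
  simp only [List.map_cons, List.map_nil]
  refine Primrec.encode.comp (Primrec.pair (Primrec.pair (Primrec.const _) ?_) (Primrec.const _))
  refine Primrec.list_cons.comp (Primrec.const _) (Primrec.list_cons.comp
    (Primrec.pair (Primrec.const _) ?_) (Primrec.const _))
  show Primrec fun n => Nat.pair 3 (Nat.pair _ (encRE (GG K' P n)))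
  exact Primrec₂.natPair.comp (Primrec.const _) (Primrec₂.natPair.comp (Primrec.const _)
    (GG_primrec K' P))

theorem main : ¬ ∃ f : ℕ → Bool, Computable f ∧
      ∀ inp : (TFPattern × RegConstraint) × (TFPattern × RegConstraint),
        (f (encodeTFInput inp) = true ↔
          LangE (inp.1.1.map Sum.inr) (constraintOf inp.1.2) =
            LangE (inp.2.1.map Sum.inr) (constraintOf inp.2.2)) := by
  rintro ⟨f, hf, h⟩
  obtain ⟨P, hP⟩ := exists_prog
  obtain ⟨K', -, hb⟩ := exists_bound (nop :: lets P)
  apply hP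
  have hc : ComputablePred fun n => ¬ Acc P n := by
    rw [ComputablePred.computable_iff]
    refine ⟨fun n => f (encodeTFInput (inp K' P n)), hf.comp (inp_primrec K' P).to_comp, ?_⟩
    funext n
    exact propext (((h (inp K' P n)).trans (lang_iff n hb)).symm)
  refine hc.not.of_eq fun n => ?_
  rw [not_not]; rfl


end EqUndec

/-- The equivalence problem for erasing pattern languages with regular constraints over
the binary alphabet is undecidable already for terminal-free patterns. -/
theorem equivalence_EPatternRegConstraints_terminalFree_undecidable :
    ¬ ∃ f : ℕ → Bool, Computable f ∧
      ∀ inp : (TFPattern × RegConstraint) × (TFPattern × RegConstraint),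
        (f (encodeTFInput inp) = true ↔
          LangE (inp.1.1.map Sum.inr) (constraintOf inp.1.2) =
            LangE (inp.2.1.map Sum.inr) (constraintOf inp.2.2)) := by
  exact EqUndec.main
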